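/- Let α be an irrational real number and let (m_k) be given by the Master recursion, with m(x) = Σ_{k≥1} m_k x^k of radius of convergence R > 0. Then the series converges at the radius of convergence: Σ_{k≥1} m_k R^k < ∞, and consequently m extends to a continuous function on the closed disk {x ∈ ℂ : |x| ≤ R}, holomorphic in the interior. -/

import Mathlib

/-- `D α k = 2(1 - cos(2πkα))`, the small denominator of the Master recursion. -/
noncomputable def D (α : ℝ) (k : ℕ) : ℝ := 2 * (1 - Real.cos (2 * Real.pi * k * α))

/-!
Formally `F = exp m`, and all coefficients are nonnegative, so `F` dominates the single term
`m² / 2` of the exponential series coefficientwise. Since the denominators are at most `4`, the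
recursion `F_k = D(k+1) m_{k+1}` turns this into `r m(r)² / 2 ≤ 4 m(r)` for `0 < r < R`, a quadratic
weakening of the a priori bound `r exp(m(r)) ≤ 4 m(r)` which suffices: it gives `m(r) ≤ 8 / r`.
Hence the partial sums of the series stay bounded as `r → R`, and the series converges at `R`. It
then converges uniformly on the closed disk.
-/

open Finset Filter Topology

section Convolution

variable {R : Type*} [CommSemiring R]

theorem sum_antidiagonal_natCast_mul (a b : ℕ → R) (k : ℕ) :
    ∑ p ∈ antidiagonal k, (p.1 : R) * a p.1 * b p.2 =
      ∑ j ∈ Icc 1 k, (j : R) * a j * b (k - j) := by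
  rw [Nat.sum_antidiagonal_eq_sum_range_succ (fun i j => (i : R) * a i * b j),
    range_eq_Ico, sum_eq_sum_Ico_succ_bot k.succ_pos]
  simp only [Nat.cast_zero, zero_mul, zero_add]
  rfl

-- The coefficient form of `(a²)' = 2 a' a`.
theorem natCast_mul_sum_antidiagonal_mul_self (a : ℕ → R) (k : ℕ) :
    (k : R) * ∑ p ∈ antidiagonal k, a p.1 * a p.2 =
      2 * ∑ p ∈ antidiagonal k, (p.1 : R) * a p.1 * a p.2 := by
  have swap : ∑ p ∈ antidiagonal k, (p.2 : R) * a p.1 * a p.2 =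
      ∑ p ∈ antidiagonal k, (p.1 : R) * a p.1 * a p.2 := by
    rw [← Nat.sum_antidiagonal_swap]
    exact sum_congr rfl fun p _ => by simp only [Prod.fst_swap, Prod.snd_swap]; ring
  calc (k : R) * ∑ p ∈ antidiagonal k, a p.1 * a p.2
      = ∑ p ∈ antidiagonal k, ((p.1 : R) * a p.1 * a p.2 + (p.2 : R) * a p.1 * a p.2) := by
        rw [mul_sum]
        refine sum_congr rfl fun p hp => ?_
        rw [← mem_antidiagonal.1 hp]
        push_cast
        ring
    _ = 2 * ∑ p ∈ antidiagonal k, (p.1 : R) * a p.1 * a p.2 := by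
        rw [sum_add_distrib, swap, two_mul]

theorem sum_antidiagonal_mul_pow (a b : ℕ → R) (r : R) (k : ℕ) :
    ∑ p ∈ antidiagonal k, a p.1 * r ^ p.1 * (b p.2 * r ^ p.2) =
      (∑ p ∈ antidiagonal k, a p.1 * b p.2) * r ^ k := by
  rw [sum_mul]
  refine sum_congr rfl fun p hp => ?_
  rw [← mem_antidiagonal.1 hp]
  ring

end Convolution

/-- `F` is the coefficient sequence of the formal exponential of the power series with coefficients
`m`. It is encoded by `m 0 = 0`, `F 0 = 1` and the coefficients of `x F' = (x m') F`, which
determine `F` in characteristic zero without division. -/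
structure IsFormalExp {R : Type*} [Semiring R] (m F : ℕ → R) : Prop where
  exponent_zero : m 0 = 0
  exp_zero : F 0 = 1
  natCast_mul_eq_sum_Icc (k : ℕ) (hk : 1 ≤ k) :
    (k : R) * F k = ∑ j ∈ Icc 1 k, (j : R) * m j * F (k - j)

namespace IsFormalExp

variable {R : Type*} [CommSemiring R] {m F : ℕ → R}

theorem natCast_mul_eq_sum_antidiagonal (h : IsFormalExp m F) (k : ℕ) :
    (k : R) * F k = ∑ p ∈ antidiagonal k, (p.1 : R) * m p.1 * F p.2 := by
  rw [sum_antidiagonal_natCast_mul]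
  rcases k.eq_zero_or_pos with rfl | hk
  · simp
  · exact h.natCast_mul_eq_sum_Icc k hk

variable [LinearOrder R] [IsStrictOrderedRing R]

theorem nonneg_of_forall_le (h : IsFormalExp m F) {k : ℕ} (hm : ∀ j ≤ k, 0 ≤ m j) : 0 ≤ F k := by
  induction k using Nat.strong_induction_on with
  | _ k ih =>
    rcases k.eq_zero_or_pos with rfl | hk
    · exact h.exp_zero ▸ zero_le_one
    refine nonneg_of_mul_nonneg_right (a := (k : R)) ?_ (Nat.cast_pos.2 hk)
    rw [h.natCast_mul_eq_sum_Icc k hk]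
    refine sum_nonneg fun j hj => ?_
    obtain ⟨one_le, le⟩ := mem_Icc.1 hj
    exact mul_nonneg (mul_nonneg (Nat.cast_nonneg j) (hm j le))
      (ih (k - j) (by omega) fun i hi => hm i (by omega))

theorem exponent_le_exp (h : IsFormalExp m F) (hm : ∀ k, 0 ≤ m k) (k : ℕ) : m k ≤ F k := by
  have hF (j : ℕ) : 0 ≤ F j := h.nonneg_of_forall_le fun i _ => hm i
  rcases k.eq_zero_or_pos with rfl | hk
  · exact h.exponent_zero ▸ hF 0
  refine le_of_mul_le_mul_left ?_ (Nat.cast_pos (α := R).2 hk)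
  calc (k : R) * m k = (k : R) * m k * F 0 := by rw [h.exp_zero, mul_one]
    _ ≤ ∑ p ∈ antidiagonal k, (p.1 : R) * m p.1 * F p.2 :=
        single_le_sum (a := (k, 0)) (f := fun p : ℕ × ℕ => (p.1 : R) * m p.1 * F p.2)
          (fun p _ => mul_nonneg (mul_nonneg (Nat.cast_nonneg p.1) (hm p.1)) (hF p.2))
          (mem_antidiagonal.2 (add_zero k))
    _ = k * F k := (h.natCast_mul_eq_sum_antidiagonal k).symm

theorem sum_antidiagonal_mul_self_le (h : IsFormalExp m F) (hm : ∀ k, 0 ≤ m k) (k : ℕ) :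
    ∑ p ∈ antidiagonal k, m p.1 * m p.2 ≤ 2 * F k := by
  rcases k.eq_zero_or_pos with rfl | hk
  · simp [h.exponent_zero, h.exp_zero]
  refine le_of_mul_le_mul_left ?_ (Nat.cast_pos (α := R).2 hk)
  calc (k : R) * ∑ p ∈ antidiagonal k, m p.1 * m p.2
      = 2 * ∑ p ∈ antidiagonal k, (p.1 : R) * m p.1 * m p.2 :=
        natCast_mul_sum_antidiagonal_mul_self m k
    _ ≤ 2 * ∑ p ∈ antidiagonal k, (p.1 : R) * m p.1 * F p.2 := by
        gcongr with p
        · exact mul_nonneg (Nat.cast_nonneg p.1) (hm p.1)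
        · exact h.exponent_le_exp hm p.2
    _ = k * (2 * F k) := by rw [← h.natCast_mul_eq_sum_antidiagonal k, mul_left_comm]

end IsFormalExp

section PowerSeries

theorem mul_tsum_sq_le_of_sum_antidiagonal_le {a : ℕ → ℝ} {C r : ℝ} (hC0 : 0 ≤ C)
    (hr : 0 ≤ r) (ha : 0 ≤ a 0) (hC : ∀ k, ∑ p ∈ antidiagonal k, a p.1 * a p.2 ≤ C * a (k + 1))
    (hs : Summable fun k => a k * r ^ k) :
    r * (∑' k, a k * r ^ k) ^ 2 ≤ C * ∑' k, a k * r ^ k := by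
  have cauchy : Summable fun k =>
      ∑ p ∈ antidiagonal k, a p.1 * r ^ p.1 * (a p.2 * r ^ p.2) :=
    (summable_norm_sum_mul_antidiagonal_of_summable_norm hs.norm hs.norm).of_norm
  calc r * (∑' k, a k * r ^ k) ^ 2
      = ∑' k, r * ∑ p ∈ antidiagonal k, a p.1 * r ^ p.1 * (a p.2 * r ^ p.2) := by
        rw [sq, tsum_mul_tsum_eq_tsum_sum_antidiagonal_of_summable_norm hs.norm hs.norm,
          tsum_mul_left]
    _ ≤ ∑' k, C * (a (k + 1) * r ^ (k + 1)) := by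
        refine (cauchy.mul_left r).tsum_le_tsum (fun k => ?_)
          (((summable_nat_add_iff 1).2 hs).mul_left C)
        calc r * ∑ p ∈ antidiagonal k, a p.1 * r ^ p.1 * (a p.2 * r ^ p.2)
            = (∑ p ∈ antidiagonal k, a p.1 * a p.2) * r ^ (k + 1) := by
              rw [sum_antidiagonal_mul_pow]; ring
          _ ≤ C * a (k + 1) * r ^ (k + 1) := by gcongr; exact hC k
          _ = C * (a (k + 1) * r ^ (k + 1)) := mul_assoc _ _ _
    _ ≤ C * ∑' k, a k * r ^ k := by
        rw [tsum_mul_left, hs.tsum_eq_zero_add, pow_zero, mul_one]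
        gcongr
        exact le_add_of_nonneg_left ha

theorem tsum_le_div_of_sum_antidiagonal_le {a : ℕ → ℝ} {C r : ℝ} (hC0 : 0 ≤ C) (hr : 0 < r)
    (ha : 0 ≤ a 0) (hC : ∀ k, ∑ p ∈ antidiagonal k, a p.1 * a p.2 ≤ C * a (k + 1))
    (hs : Summable fun k => a k * r ^ k) :
    ∑' k, a k * r ^ k ≤ C / r := by
  have quadratic := mul_tsum_sq_le_of_sum_antidiagonal_le hC0 hr.le ha hC hs
  rcases le_or_gt (∑' k, a k * r ^ k) 0 with nonpos | pos
  · exact nonpos.trans (by positivity)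
  rw [le_div_iff₀' hr]
  refine le_of_mul_le_mul_right ?_ pos
  rwa [mul_assoc, ← sq]

theorem summable_mul_pow_of_eventually_tsum_le {a : ℕ → ℝ} {R B : ℝ} (ha : ∀ k, 0 ≤ a k)
    (hR : 0 < R)
    (h : ∀ᶠ r in 𝓝[<] R, (Summable fun k => a k * r ^ k) ∧ ∑' k, a k * r ^ k ≤ B) :
    Summable fun k => a k * R ^ k := by
  refine summable_of_sum_range_le (c := B) (fun k => mul_nonneg (ha k) (by positivity)) fun n => ?_
  have tendsto_partial : Tendsto (fun r : ℝ => ∑ k ∈ range n, a k * r ^ k) (𝓝[<] R)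
      (𝓝 (∑ k ∈ range n, a k * R ^ k)) :=
    (Continuous.tendsto (by fun_prop) R).mono_left nhdsWithin_le_nhds
  refine le_of_tendsto tendsto_partial ?_
  filter_upwards [h, Ioo_mem_nhdsLT hR] with r ⟨hs, hB⟩ hr
  exact (hs.sum_le_tsum _ fun k _ => mul_nonneg (ha k) (pow_nonneg hr.1.le k)).trans hB

theorem summable_mul_pow_of_sum_antidiagonal_le {a : ℕ → ℝ} {C R : ℝ} (hC0 : 0 ≤ C) (hR : 0 < R)
    (ha : ∀ k, 0 ≤ a k) (hC : ∀ k, ∑ p ∈ antidiagonal k, a p.1 * a p.2 ≤ C * a (k + 1))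
    (hs : ∀ r ∈ Set.Ioo 0 R, Summable fun k => a k * r ^ k) :
    Summable fun k => a k * R ^ k := by
  refine summable_mul_pow_of_eventually_tsum_le (B := C / (R / 2)) ha hR ?_
  filter_upwards [Ioo_mem_nhdsLT (half_lt_self hR)] with r ⟨half_lt, lt⟩
  have r_pos : 0 < r := (half_pos hR).trans half_lt
  have summable_r := hs r ⟨r_pos, lt⟩
  refine ⟨summable_r, ?_⟩
  calc ∑' k, a k * r ^ k ≤ C / r :=
        tsum_le_div_of_sum_antidiagonal_le hC0 r_pos (ha 0) hC summable_r
    _ ≤ C / (R / 2) := by gcongr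

theorem norm_mul_pow_le_of_norm_le {𝕜 : Type*} [NormedDivisionRing 𝕜] (a : 𝕜) {x : 𝕜} {R : ℝ}
    (hx : ‖x‖ ≤ R) (k : ℕ) : ‖a * x ^ k‖ ≤ ‖a‖ * R ^ k := by
  rw [norm_mul, norm_pow]
  gcongr

theorem continuousOn_tsum_mul_pow_closedBall {𝕜 : Type*} [NormedDivisionRing 𝕜] [CompleteSpace 𝕜]
    {a : ℕ → 𝕜} {R : ℝ} (hs : Summable fun k => ‖a k‖ * R ^ k) :
    ContinuousOn (fun x : 𝕜 => ∑' k, a k * x ^ k) (Metric.closedBall 0 R) :=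
  continuousOn_tsum (fun k => by fun_prop) hs fun k _ hx =>
    norm_mul_pow_le_of_norm_le (a k) (mem_closedBall_zero_iff.1 hx) k

theorem differentiableOn_tsum_mul_pow_ball {a : ℕ → ℂ} {R : ℝ}
    (hs : Summable fun k => ‖a k‖ * R ^ k) :
    DifferentiableOn ℂ (fun x : ℂ => ∑' k, a k * x ^ k) (Metric.ball 0 R) :=
  Complex.differentiableOn_tsum_of_summable_norm hs (fun k => by fun_prop) Metric.isOpen_ball
    fun k _ hx => norm_mul_pow_le_of_norm_le (a k) (mem_ball_zero_iff.1 hx).le k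

end PowerSeries

/-- The Master recursion with an arbitrary sequence of denominators `d` in place of `D α`,
indexed from `1`. Where `d k = 0`, division by zero forces `m k = 0`. -/
structure IsMasterRecursion {K : Type*} [Semifield K] (d m F : ℕ → K) : Prop
    extends IsFormalExp m F where
  exponent_succ (k : ℕ) : m (k + 1) = F k / d (k + 1)

namespace IsMasterRecursion

variable {K : Type*} [Semifield K] [LinearOrder K] [IsStrictOrderedRing K] {d m F : ℕ → K}

theorem exponent_nonneg (h : IsMasterRecursion d m F) (hd : ∀ k, 0 < d (k + 1)) (k : ℕ) :
    0 ≤ m k := by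
  induction k using Nat.strong_induction_on with
  | _ k ih =>
    cases k with
    | zero => exact h.exponent_zero.ge
    | succ k =>
      rw [h.exponent_succ]
      exact div_nonneg (h.nonneg_of_forall_le fun j hj => ih j (Nat.lt_succ_of_le hj)) (hd k).le

theorem sum_antidiagonal_mul_self_le_mul_succ (h : IsMasterRecursion d m F) {C : K}
    (hd : ∀ k, 0 < d (k + 1)) (hC : ∀ k, d (k + 1) ≤ C) (k : ℕ) :
    ∑ p ∈ antidiagonal k, m p.1 * m p.2 ≤ 2 * C * m (k + 1) := by
  have hm := h.exponent_nonneg hd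
  calc ∑ p ∈ antidiagonal k, m p.1 * m p.2 ≤ 2 * F k := h.sum_antidiagonal_mul_self_le hm k
    _ = 2 * d (k + 1) * m (k + 1) := by
        rw [h.exponent_succ, mul_assoc, mul_div_cancel₀ _ (hd k).ne']
    _ ≤ 2 * C * m (k + 1) := by
        gcongr
        · exact hm (k + 1)
        · exact hC k

end IsMasterRecursion

theorem D_pos {α : ℝ} (hα : Irrational α) {k : ℕ} (hk : k ≠ 0) : 0 < D α k := by
  have cos_ne_one : Real.cos (2 * Real.pi * k * α) ≠ 1 := by
    intro h
    obtain ⟨n, hn⟩ := (Real.cos_eq_one_iff _).1 h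
    have mul_eq_int : (k : ℝ) * α = n :=
      mul_left_cancel₀ Real.two_pi_pos.ne' (by linarith)
    exact (hα.natCast_mul hk).ne_int n mul_eq_int
  exact mul_pos two_pos (sub_pos.2 ((Real.cos_le_one _).lt_of_ne cos_ne_one))

theorem D_le_four (α : ℝ) (k : ℕ) : D α k ≤ 4 := by
  have := Real.neg_one_le_cos (2 * Real.pi * k * α)
  unfold D
  linarith

theorem stmt4_general {d m F : ℕ → ℝ} {C R : ℝ} (h : IsMasterRecursion d m F)
    (hd : ∀ k, 0 < d (k + 1)) (hC : ∀ k, d (k + 1) ≤ C) (hR : 0 < R)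
    (hconv : ∀ x : ℂ, ‖x‖ < R → Summable fun k : ℕ => (m k : ℂ) * x ^ k) :
    (Summable fun k : ℕ => m k * R ^ k) ∧
    ContinuousOn (fun x : ℂ => ∑' k : ℕ, (m k : ℂ) * x ^ k) (Metric.closedBall 0 R) ∧
    DifferentiableOn ℂ (fun x : ℂ => ∑' k : ℕ, (m k : ℂ) * x ^ k) (Metric.ball 0 R) := by
  have hm := h.exponent_nonneg hd
  have C_pos : 0 < C := (hd 0).trans_le (hC 0)
  have summable_inside (r : ℝ) (hr : r ∈ Set.Ioo 0 R) : Summable fun k => m k * r ^ k := by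
    exact_mod_cast hconv r (by simpa [abs_of_pos hr.1] using hr.2)
  have summable_R : Summable fun k => m k * R ^ k :=
    summable_mul_pow_of_sum_antidiagonal_le (by positivity) hR hm
      (h.sum_antidiagonal_mul_self_le_mul_succ hd hC) summable_inside
  have summable_norm_R : Summable fun k => ‖(m k : ℂ)‖ * R ^ k := by
    simpa only [Complex.norm_of_nonneg (hm _)] using summable_R
  exact ⟨summable_R, continuousOn_tsum_mul_pow_closedBall summable_norm_R,
    differentiableOn_tsum_mul_pow_ball summable_norm_R⟩

/-- if `R > 0` is the radius of convergence of `m(x) = Σ m_k x^k`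
(convergence for `‖x‖ < R`, divergence for `r > R`), then the series converges at
the radius of convergence, `Σ m_k R^k < ∞`, and hence `m` extends continuously to
the closed disk `{|x| ≤ R}`, holomorphically in the interior. -/
theorem stmt4 (α : ℝ) (hα : Irrational α) (m F : ℕ → ℝ)
    (hm0 : m 0 = 0) (hF0 : F 0 = 1)
    (hm : ∀ k : ℕ, m (k + 1) = F k / D α (k + 1))
    (hF : ∀ k : ℕ, 1 ≤ k →
      (k : ℝ) * F k = ∑ j ∈ Finset.Icc 1 k, (j : ℝ) * m j * F (k - j))
    (R : ℝ) (hR : 0 < R)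
    (hconv : ∀ x : ℂ, ‖x‖ < R → Summable fun k : ℕ => (m k : ℂ) * x ^ k)
    (hdiv : ∀ r : ℝ, R < r → ¬ Summable fun k : ℕ => m k * r ^ k) :
    (Summable fun k : ℕ => m k * R ^ k) ∧
    ContinuousOn (fun x : ℂ => ∑' k : ℕ, (m k : ℂ) * x ^ k) (Metric.closedBall 0 R) ∧
    DifferentiableOn ℂ (fun x : ℂ => ∑' k : ℕ, (m k : ℂ) * x ^ k) (Metric.ball 0 R) := by
  exact stmt4_general ⟨⟨hm0, hF0, hF⟩, hm⟩ (fun k => D_pos hα k.succ_ne_zero)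
    (fun k => D_le_four α (k + 1)) hR hconv
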